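/- arXiv:0704.3109 — 10 statements merged into one kernel-verified Lean document; each statement's English description precedes it below -/
import Mathlib

section
/- Let (L,·) be a left quasigroup, (M,μ) a ternary system, and π : L → M a bijection. The family of maps R^{(L,M,π)}(λ) (λ ∈ L) is a dynamical Yang–Baxter map associated with L, L, and the multiplication, i.e. with φ(λ,u) = λ·u, if and only if the ternary operation μ satisfies conditions (M1) and (M2). -/
/-- Condition (M1) for a ternary operation. -/
def CondM1 {M : Type*} (μ : M → M → M → M) : Prop :=
  ∀ a b c d : M, μ a (μ a b c) (μ (μ a b c) c d) = μ a b (μ b c d)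

/-- Condition (M2) for a ternary operation. -/
def CondM2 {M : Type*} (μ : M → M → M → M) : Prop :=
  ∀ a b c d : M, μ (μ a b c) c d = μ (μ a b (μ b c d)) (μ b c d) d

/-- ξ_λ(u)(v) = λ\π⁻¹(μ(π(λ), π(λ·u), π((λ·u)·v))). -/
def xiMap {L M : Type*} (mul ld : L → L → L) (μ : M → M → M → M) (π : L ≃ M)
    (lam u v : L) : L :=
  ld lam (π.symm (μ (π lam) (π (mul lam u)) (π (mul (mul lam u) v))))

/-- R^{(L,M,π)}(λ)(u,v) = ((λ·ξ_λ(u)(v))\((λ·u)·v), ξ_λ(u)(v)). -/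
def Rmap {L M : Type*} (mul ld : L → L → L) (μ : M → M → M → M) (π : L ≃ M)
    (lam : L) (p : L × L) : L × L :=
  (ld (mul lam (xiMap mul ld μ π lam p.1 p.2)) (mul (mul lam p.1) p.2),
    xiMap mul ld μ π lam p.1 p.2)

/-- R applied to components 1,2 of a triple. -/
def r12 {X : Type*} (R : X × X → X × X) (t : X × X × X) : X × X × X :=
  ((R (t.1, t.2.1)).1, (R (t.1, t.2.1)).2, t.2.2)

/-- R applied to components 1,3 of a triple. -/
def r13 {X : Type*} (R : X × X → X × X) (t : X × X × X) : X × X × X :=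
  ((R (t.1, t.2.2)).1, t.2.1, (R (t.1, t.2.2)).2)

/-- R applied to components 2,3 of a triple. -/
def r23 {X : Type*} (R : X × X → X × X) (t : X × X × X) : X × X × X :=
  (t.1, R (t.2.1, t.2.2))

/-- The family R(λ) is a dynamical Yang–Baxter map associated with H, X, φ:
R_23(λ) ∘ R_13(φ(λ,X⁽²⁾)) ∘ R_12(λ) = R_12(φ(λ,X⁽³⁾)) ∘ R_13(λ) ∘ R_23(φ(λ,X⁽¹⁾)). -/
def IsDynamicalYB {H X : Type*} (φ : H → X → H) (R : H → X × X → X × X) : Prop :=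
  ∀ (lam : H) (t : X × X × X),
    r23 (R lam) ((fun t' => r13 (R (φ lam t'.2.1)) t') (r12 (R lam) t))
      =
    (fun t' => r12 (R (φ lam t'.2.2)) t')
      (r13 (R lam) ((fun t' => r23 (R (φ lam t'.1)) t') t))

/-!
Write `s(u, v) = R(λ)(u, v)` with its two outputs exchanged. A triple `(u, v, w)` at the dynamical
parameter `λ` is a path with vertices `λ`, `λ·u`, `(λ·u)·v`, `((λ·u)·v)·w`, and in these terms the
dynamical Yang–Baxter equation is the braid relation between `s` on the first two edges and `s` on
the last two. For `R^{(L,M,π)}` the map `s` keeps the endpoints `a`, `c` of a path `a, b, c` and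
moves its inner vertex `b` to `μ a b c`. Comparing the two inner vertices on both sides of the braid
relation gives (M1) and (M2).
-/

/-- The braid relation between two self-maps of a type. -/
def BraidRelation {α : Type*} (f g : α → α) : Prop :=
  f ∘ g ∘ f = g ∘ f ∘ g

theorem braidRelation_iff_of_semiconj {α β : Type*} {f₁ f₂ : α → α} {g₁ g₂ : β → β}
    {σ : β → α} {ρ : α → β} (hσ : Function.Injective σ)
    (h₁ : Function.Semiconj σ g₁ f₁) (h₂ : Function.Semiconj σ g₂ f₂)
    (h₁₂₁ : ∀ p, f₁ (f₂ (f₁ (σ (ρ p)))) = f₁ (f₂ (f₁ p)))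
    (h₂₁₂ : ∀ p, f₂ (f₁ (f₂ (σ (ρ p)))) = f₂ (f₁ (f₂ p))) :
    BraidRelation f₁ f₂ ↔ BraidRelation g₁ g₂ := by
  have lift₁₂₁ : Function.Semiconj σ (g₁ ∘ g₂ ∘ g₁) (f₁ ∘ f₂ ∘ f₁) :=
    h₁.comp_right (h₂.comp_right h₁)
  have lift₂₁₂ : Function.Semiconj σ (g₂ ∘ g₁ ∘ g₂) (f₂ ∘ f₁ ∘ f₂) :=
    h₂.comp_right (h₁.comp_right h₂)
  constructor
  · intro hf
    funext q
    apply hσ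
    rw [lift₁₂₁.eq, lift₂₁₂.eq, hf]
  · intro hg
    funext p
    calc f₁ (f₂ (f₁ p)) = (f₁ ∘ f₂ ∘ f₁) (σ (ρ p)) := (h₁₂₁ p).symm
      _ = (f₂ ∘ f₁ ∘ f₂) (σ (ρ p)) := by rw [← lift₁₂₁.eq, ← lift₂₁₂.eq, hg]
      _ = f₂ (f₁ (f₂ p)) := h₂₁₂ p

section DynamicalBraiding

variable {H X : Type*}

/-- The braid form of a dynamical family `R` on the first two of three edges: apply `R` at the
parameter `λ` and exchange the outputs. The parameter is carried along as the first component. -/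
def braidLeft (R : H → X × X → X × X) (p : H × X × X × X) : H × X × X × X :=
  (p.1, (R p.1 (p.2.1, p.2.2.1)).2, (R p.1 (p.2.1, p.2.2.1)).1, p.2.2.2)

/-- The braid form of a dynamical family `R` on the last two of three edges, where the parameter has
been moved along the first edge by `φ`. -/
def braidRight (φ : H → X → H) (R : H → X × X → X × X) (p : H × X × X × X) : H × X × X × X :=
  (p.1, p.2.1, (R (φ p.1 p.2.1) p.2.2).2, (R (φ p.1 p.2.1) p.2.2).1)

theorem isDynamicalYB_iff_braidRelation (φ : H → X → H) (R : H → X × X → X × X) :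
    IsDynamicalYB φ R ↔ BraidRelation (braidLeft R) (braidRight φ R) := by
  -- The three exchanges on each side compose to the reversal of the triple.
  let rev (lam : H) (t : X × X × X) : H × X × X × X := (lam, t.2.2, t.2.1, t.1)
  have rev_injective (lam : H) : Function.Injective (rev lam) := by
    rintro ⟨u, v, w⟩ ⟨u', v', w'⟩ h
    simp only [rev, Prod.mk.injEq, true_and] at h
    obtain ⟨rfl, rfl, rfl⟩ := h
    rfl
  constructor
  · intro h
    funext ⟨lam, t⟩
    exact congrArg (rev lam) (h lam t)
  · intro h lam t
    exact rev_injective lam (congrFun h (lam, t))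

end DynamicalBraiding

section VertexMoves

variable {M : Type*} (μ : M → M → M → M)

/-- Moves the second vertex of a path `a, b, c, d` to `μ a b c`. -/
def moveSecond (p : M × M × M × M) : M × M × M × M :=
  (p.1, μ p.1 p.2.1 p.2.2.1, p.2.2.1, p.2.2.2)

/-- Moves the third vertex of a path `a, b, c, d` to `μ b c d`. -/
def moveThird (p : M × M × M × M) : M × M × M × M :=
  (p.1, p.2.1, μ p.2.1 p.2.2.1 p.2.2.2, p.2.2.2)

theorem braidRelation_moves_iff :
    BraidRelation (moveSecond μ) (moveThird μ) ↔ CondM1 μ ∧ CondM2 μ := by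
  simp only [BraidRelation, funext_iff, Prod.forall, Function.comp_apply, moveSecond, moveThird,
    Prod.mk.injEq, true_and, and_true, forall_and, CondM1, CondM2]

end VertexMoves

section Paths

variable {L M : Type*} (mul ld : L → L → L) (μ : M → M → M → M) (π : L ≃ M)

/-- The vertices, labelled in `M`, of the path that starts at `λ` and has edges `u, v, w`. -/
def pathVertices (p : L × L × L × L) : M × M × M × M :=
  (π p.1, π (mul p.1 p.2.1), π (mul (mul p.1 p.2.1) p.2.2.1),
    π (mul (mul (mul p.1 p.2.1) p.2.2.1) p.2.2.2))

/-- The path with prescribed vertices, given by its starting point and its edges, each edge being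
the left quotient of consecutive vertices. -/
def pathOfVertices (q : M × M × M × M) : L × L × L × L :=
  (π.symm q.1, ld (π.symm q.1) (π.symm q.2.1), ld (π.symm q.2.1) (π.symm q.2.2.1),
    ld (π.symm q.2.2.1) (π.symm q.2.2.2))

variable {mul ld}

theorem pathVertices_leftInverse (hmul : ∀ u w : L, mul u (ld u w) = w) :
    Function.LeftInverse (pathVertices mul π) (pathOfVertices ld π) := by
  rintro ⟨a, b, c, d⟩
  simp only [pathVertices, pathOfVertices, hmul, Equiv.apply_symm_apply]

theorem pathOfVertices_semiconj_moveSecond (hmul : ∀ u w : L, mul u (ld u w) = w) :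
    Function.Semiconj (pathOfVertices ld π) (moveSecond μ) (braidLeft (Rmap mul ld μ π)) := by
  rintro ⟨a, b, c, d⟩
  simp only [pathOfVertices, moveSecond, braidLeft, Rmap, xiMap, hmul, Equiv.apply_symm_apply]

theorem pathOfVertices_semiconj_moveThird (hmul : ∀ u w : L, mul u (ld u w) = w) :
    Function.Semiconj (pathOfVertices ld π) (moveThird μ)
      (braidRight mul (Rmap mul ld μ π)) := by
  rintro ⟨a, b, c, d⟩
  simp only [pathOfVertices, moveThird, braidRight, Rmap, xiMap, hmul, Equiv.apply_symm_apply]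

/-- Every edge of the result is a left quotient of vertices, so only the vertices of `p` matter. -/
theorem braidLeft_braidRight_braidLeft_pathOfVertices_pathVertices
    (hmul : ∀ u w : L, mul u (ld u w) = w) (p : L × L × L × L) :
    braidLeft (Rmap mul ld μ π) (braidRight mul (Rmap mul ld μ π)
        (braidLeft (Rmap mul ld μ π) (pathOfVertices ld π (pathVertices mul π p)))) =
      braidLeft (Rmap mul ld μ π) (braidRight mul (Rmap mul ld μ π)
        (braidLeft (Rmap mul ld μ π) p)) := by
  simp only [pathOfVertices, pathVertices, braidLeft, braidRight, Rmap, xiMap, hmul,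
    Equiv.symm_apply_apply]

theorem braidRight_braidLeft_braidRight_pathOfVertices_pathVertices
    (hmul : ∀ u w : L, mul u (ld u w) = w) (p : L × L × L × L) :
    braidRight mul (Rmap mul ld μ π) (braidLeft (Rmap mul ld μ π)
        (braidRight mul (Rmap mul ld μ π) (pathOfVertices ld π (pathVertices mul π p)))) =
      braidRight mul (Rmap mul ld μ π) (braidLeft (Rmap mul ld μ π)
        (braidRight mul (Rmap mul ld μ π) p)) := by
  simp only [pathOfVertices, pathVertices, braidLeft, braidRight, Rmap, xiMap, hmul,
    Equiv.symm_apply_apply]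

end Paths

theorem Rmap_isDynamicalYB_iff_general {L M : Type*} (mul ld : L → L → L)
    (hmul : ∀ u w : L, mul u (ld u w) = w) (μ : M → M → M → M) (π : L ≃ M) :
    IsDynamicalYB (fun lam u => mul lam u) (Rmap mul ld μ π) ↔ (CondM1 μ ∧ CondM2 μ) :=
  calc IsDynamicalYB mul (Rmap mul ld μ π)
    _ ↔ BraidRelation (braidLeft (Rmap mul ld μ π)) (braidRight mul (Rmap mul ld μ π)) :=
      isDynamicalYB_iff_braidRelation mul (Rmap mul ld μ π)
    _ ↔ BraidRelation (moveSecond μ) (moveThird μ) :=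
      braidRelation_iff_of_semiconj (pathVertices_leftInverse π hmul).injective
        (pathOfVertices_semiconj_moveSecond μ π hmul)
        (pathOfVertices_semiconj_moveThird μ π hmul)
        (braidLeft_braidRight_braidLeft_pathOfVertices_pathVertices μ π hmul)
        (braidRight_braidLeft_braidRight_pathOfVertices_pathVertices μ π hmul)
    _ ↔ CondM1 μ ∧ CondM2 μ := braidRelation_moves_iff μ

/-- R^{(L,M,π)} is a dynamical Yang–Baxter map associated with L, L, (·)
iff μ satisfies (M1) and (M2). -/
theorem Rmap_isDynamicalYB_iff {L M : Type*} [Nonempty L] [Nonempty M]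
    (mul ld : L → L → L)
    (hmul : ∀ u w : L, mul u (ld u w) = w)
    (hld : ∀ u v : L, ld u (mul u v) = v)
    (μ : M → M → M → M) (π : L ≃ M) :
    IsDynamicalYB (fun lam u => mul lam u) (Rmap mul ld μ π) ↔
      (CondM1 μ ∧ CondM2 μ) := by
  exact Rmap_isDynamicalYB_iff_general mul ld hmul μ π
end

section
/- Let (L,·) be a left quasigroup, (M,μ) a ternary system, and π : L → M a bijection. For λ ∈ L define f_λ : L³ → L³ by f_λ(u,v,w) = (λ·u, (λ·u)·v, ((λ·u)·v)·w), the maps σ(λ)(u,v) = (ξ_λ(u)(v), (λ·ξ_λ(u)(v))\((λ·u)·v)), σ(λ)_{12}(u,v,w) = (σ(λ)(u,v), w), σ(λL⁽¹⁾)_{23}(u,v,w) = (u, σ(λ·u)(v,w)), and the maps s(a)_{12}(x,y,z) = (μ(a,x,y), y, z) and s(x,y,z) = (x, μ(x,y,z), z) on M³. Then: (i) f_λ is a bijection with inverse (u,v,w) ↦ (λ\u, u\v, v\w); (ii) σ(λ)_{12} = f_λ⁻¹ ∘ (π⁻¹×π⁻¹×π⁻¹) ∘ s(π(λ))_{12}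 ∘ (π×π×π) ∘ f_λ; and (iii) σ(λL⁽¹⁾)_{23} = f_λ⁻¹ ∘ (π⁻¹×π⁻¹×π⁻¹) ∘ s ∘ (π×π×π) ∘ f_λ. -/
/-- σ(λ)(u,v) = (ξ_λ(u)(v), (λ·ξ_λ(u)(v))\((λ·u)·v)). -/
def sigmaMap {L M : Type*} (mul ld : L → L → L) (μ : M → M → M → M) (π : L ≃ M)
    (lam : L) (p : L × L) : L × L :=
  (xiMap mul ld μ π lam p.1 p.2,
    ld (mul lam (xiMap mul ld μ π lam p.1 p.2)) (mul (mul lam p.1) p.2))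

/-- σ(λ)_{12}(u,v,w) = (σ(λ)(u,v), w). -/
def sigma12 {L M : Type*} (mul ld : L → L → L) (μ : M → M → M → M) (π : L ≃ M)
    (lam : L) (t : L × L × L) : L × L × L :=
  ((sigmaMap mul ld μ π lam (t.1, t.2.1)).1,
    (sigmaMap mul ld μ π lam (t.1, t.2.1)).2, t.2.2)

/-- σ(λ L⁽¹⁾)_{23}(u,v,w) = (u, σ(λ·u)(v,w)). -/
def sigma23dyn {L M : Type*} (mul ld : L → L → L) (μ : M → M → M → M) (π : L ≃ M)
    (lam : L) (t : L × L × L) : L × L × L :=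
  (t.1, sigmaMap mul ld μ π (mul lam t.1) (t.2.1, t.2.2))

/-- f_λ(u,v,w) = (λ·u, (λ·u)·v, ((λ·u)·v)·w). -/
def fLam {L : Type*} (mul : L → L → L) (lam : L) (t : L × L × L) : L × L × L :=
  (mul lam t.1, mul (mul lam t.1) t.2.1, mul (mul (mul lam t.1) t.2.1) t.2.2)

/-- The candidate inverse of f_λ: (u,v,w) ↦ (λ\u, u\v, v\w). -/
def fLamInv {L : Type*} (ld : L → L → L) (lam : L) (t : L × L × L) : L × L × L :=
  (ld lam t.1, ld t.1 t.2.1, ld t.2.1 t.2.2)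

/-- s(a)_{12}(x,y,z) = (μ(a,x,y), y, z). -/
def sa12 {M : Type*} (μ : M → M → M → M) (a : M) (t : M × M × M) : M × M × M :=
  (μ a t.1 t.2.1, t.2.1, t.2.2)

/-- s(x,y,z) = (x, μ(x,y,z), z). -/
def sMap {M : Type*} (μ : M → M → M → M) (t : M × M × M) : M × M × M :=
  (t.1, μ t.1 t.2.1 t.2.2, t.2.2)

/-- π×π×π on triples. -/
def pi3 {L M : Type*} (π : L ≃ M) (t : L × L × L) : M × M × M :=
  (π t.1, π t.2.1, π t.2.2)

/-- π⁻¹×π⁻¹×π⁻¹ on triples. -/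
def pi3inv {L M : Type*} (π : L ≃ M) (t : M × M × M) : L × L × L :=
  (π.symm t.1, π.symm t.2.1, π.symm t.2.2)

/-! The map `f_λ` sends `(u, v, w)` to the vertices `λ·u`, `(λ·u)·v`, `((λ·u)·v)·w` of the path
starting at `λ` with steps `u`, `v`, `w`. In terms of vertices, `σ(λ)` keeps both ends of a path of
two steps and replaces the middle one by the value of `μ`, transported along `π`, at all three.
Hence `π³ ∘ f_λ` intertwines `σ(λ)₁₂` with `s(π(λ))₁₂` and `σ(λL⁽¹⁾)₂₃` with `s`, and composing with
the inverse of `π³ ∘ f_λ` gives the two conjugation formulas. -/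

theorem eq_comp_comp_of_leftInverse_of_semiconj {α β : Type*} {f : α → β} {g : β → α}
    {a : α → α} {b : β → β} (hg : Function.LeftInverse g f) (h : Function.Semiconj f a b) :
    a = g ∘ b ∘ f := by
  rw [← h.comp_eq, ← Function.comp_assoc, hg.comp_eq_id, Function.id_comp]

section

variable {L M : Type*} {mul ld : L → L → L}

theorem leftInverse_fLamInv (hld : ∀ u v : L, ld u (mul u v) = v) (lam : L) :
    Function.LeftInverse (fLamInv ld lam) (fLam mul lam) := fun _ => by
  simp only [fLam, fLamInv, hld]

theorem rightInverse_fLamInv (hmul : ∀ u w : L, mul u (ld u w) = w) (lam : L) :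
    Function.RightInverse (fLamInv ld lam) (fLam mul lam) := fun _ => by
  simp only [fLam, fLamInv, hmul]

theorem leftInverse_pi3inv (π : L ≃ M) : Function.LeftInverse (pi3inv π) (pi3 π) := fun _ => by
  simp only [pi3, pi3inv, Equiv.symm_apply_apply]

theorem leftInverse_fLamInv_comp_pi3inv (hld : ∀ u v : L, ld u (mul u v) = v) (π : L ≃ M)
    (lam : L) : Function.LeftInverse (fLamInv ld lam ∘ pi3inv π) (pi3 π ∘ fLam mul lam) :=
  (leftInverse_pi3inv π).comp (leftInverse_fLamInv hld lam)

theorem apply_mul_sigmaMap_fst (hmul : ∀ u w : L, mul u (ld u w) = w) (μ : M → M → M → M)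
    (π : L ≃ M) (lam : L) (p : L × L) :
    π (mul lam (sigmaMap mul ld μ π lam p).1) =
      μ (π lam) (π (mul lam p.1)) (π (mul (mul lam p.1) p.2)) := by
  simp only [sigmaMap, xiMap, hmul, Equiv.apply_symm_apply]

theorem mul_mul_sigmaMap (hmul : ∀ u w : L, mul u (ld u w) = w) (μ : M → M → M → M)
    (π : L ≃ M) (lam : L) (p : L × L) :
    mul (mul lam (sigmaMap mul ld μ π lam p).1) (sigmaMap mul ld μ π lam p).2 =
      mul (mul lam p.1) p.2 :=
  hmul _ _

theorem semiconj_sigma12_sa12 (hmul : ∀ u w : L, mul u (ld u w) = w) (μ : M → M → M → M)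
    (π : L ≃ M) (lam : L) :
    Function.Semiconj (pi3 π ∘ fLam mul lam) (sigma12 mul ld μ π lam) (sa12 μ (π lam)) := by
  intro _
  simp only [Function.comp_apply, pi3, fLam, sigma12, sa12, apply_mul_sigmaMap_fst hmul,
    mul_mul_sigmaMap hmul]

theorem semiconj_sigma23dyn_sMap (hmul : ∀ u w : L, mul u (ld u w) = w) (μ : M → M → M → M)
    (π : L ≃ M) (lam : L) :
    Function.Semiconj (pi3 π ∘ fLam mul lam) (sigma23dyn mul ld μ π lam) (sMap μ) := by
  intro _
  simp only [Function.comp_apply, pi3, fLam, sigma23dyn, sMap, apply_mul_sigmaMap_fst hmul,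
    mul_mul_sigmaMap hmul]

end

/-- f_λ is a bijection with the stated inverse, and
σ(λ)₁₂ and σ(λL⁽¹⁾)₂₃ are conjugates of s(π(λ))₁₂ and s by (π×π×π) ∘ f_λ. -/
theorem sigma_conjugation {L M : Type*} [Nonempty L] [Nonempty M]
    (mul ld : L → L → L)
    (hmul : ∀ u w : L, mul u (ld u w) = w)
    (hld : ∀ u v : L, ld u (mul u v) = v)
    (μ : M → M → M → M) (π : L ≃ M) :
    ∀ lam : L,
      Function.Bijective (fLam mul lam) ∧
      (∀ t : L × L × L, fLamInv ld lam (fLam mul lam t) = t) ∧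
      (∀ t : L × L × L, fLam mul lam (fLamInv ld lam t) = t) ∧
      sigma12 mul ld μ π lam
        = fLamInv ld lam ∘ pi3inv π ∘ sa12 μ (π lam) ∘ pi3 π ∘ fLam mul lam ∧
      sigma23dyn mul ld μ π lam
        = fLamInv ld lam ∘ pi3inv π ∘ sMap μ ∘ pi3 π ∘ fLam mul lam := by
  intro lam
  have left_inv := leftInverse_fLamInv hld lam
  have right_inv := rightInverse_fLamInv hmul lam
  have left_inv_comp := leftInverse_fLamInv_comp_pi3inv hld π lam
  exact ⟨⟨left_inv.injective, right_inv.surjective⟩, left_inv, right_inv,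
    eq_comp_comp_of_leftInverse_of_semiconj left_inv_comp (semiconj_sigma12_sa12 hmul μ π lam),
    eq_comp_comp_of_leftInverse_of_semiconj left_inv_comp (semiconj_sigma23dyn_sMap hmul μ π lam)⟩
end

section
/- Let (L,·) be a left quasigroup, let (M,μ) and (M',μ') be ternary systems satisfying conditions (M1) and (M2), and let π : L → M and π' : L → M' be bijections. Then R^{(L,M,π)}(λ) = R^{(L,M',π')}(λ) for all λ ∈ L if and only if the map h = π' ∘ π⁻¹ : M → M' is a homomorphism of ternary systems, i.e. h(μ(a,b,c)) = μ'(h(a), h(b), h(c)) for all a,b,c ∈ M. -/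
section

variable {L M M' : Type*}

/-- Homomorphisms of ternary systems `(M, μ) → (M', μ')`, as a predicate on the underlying map
because the theorem concerns one particular map, `π' ∘ π⁻¹`. -/
def IsTernaryHom (μ : M → M → M → M) (μ' : M' → M' → M' → M') (h : M → M') : Prop :=
  ∀ a b c : M, h (μ a b c) = μ' (h a) (h b) (h c)

/-- The ternary operation on `L` that makes the bijection `π : L ≃ M` an isomorphism onto `(M, μ)`.
It allows ternary systems on different sets to be compared on `L`. -/
def ternaryPullback (μ : M → M → M → M) (π : L ≃ M) (x y z : L) : L :=
  π.symm (μ (π x) (π y) (π z))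

theorem isTernaryHom_comp_symm_iff_ternaryPullback_eq (μ : M → M → M → M)
    (μ' : M' → M' → M' → M') (π : L ≃ M) (π' : L ≃ M') :
    IsTernaryHom μ μ' (π' ∘ π.symm) ↔ ternaryPullback μ π = ternaryPullback μ' π' := by
  simp only [IsTernaryHom, Function.comp_apply, ← π.forall_congr_right, Equiv.symm_apply_apply,
    funext_iff, ternaryPullback, Equiv.eq_symm_apply]

theorem Rmap_eq_iff_xiMap_eq (mul ld : L → L → L) (μ : M → M → M → M)
    (μ' : M' → M' → M' → M') (π : L ≃ M) (π' : L ≃ M') (lam : L) :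
    Rmap mul ld μ π lam = Rmap mul ld μ' π' lam ↔
      xiMap mul ld μ π lam = xiMap mul ld μ' π' lam := by
  constructor
  · intro hR
    funext u v
    exact congrArg Prod.snd (congrFun hR (u, v))
  · intro hξ
    funext p
    simp only [Rmap, hξ]

variable {mul ld : L → L → L}

theorem mul_xiMap_ld (hmul : ∀ u w : L, mul u (ld u w) = w) (μ : M → M → M → M) (π : L ≃ M)
    (x y z : L) :
    mul x (xiMap mul ld μ π x (ld x y) (ld y z)) = ternaryPullback μ π x y z := by
  simp only [xiMap, hmul, ternaryPullback]

theorem xiMap_eq_iff_ternaryPullback_eq (hmul : ∀ u w : L, mul u (ld u w) = w)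
    (μ : M → M → M → M) (μ' : M' → M' → M' → M') (π : L ≃ M) (π' : L ≃ M') (lam : L) :
    xiMap mul ld μ π lam = xiMap mul ld μ' π' lam ↔
      ternaryPullback μ π lam = ternaryPullback μ' π' lam := by
  constructor
  · intro hξ
    funext y z
    rw [← mul_xiMap_ld hmul μ, ← mul_xiMap_ld hmul μ', hξ]
  · intro hpull
    funext u v
    exact congrArg (ld lam) (congrFun₂ hpull (mul lam u) (mul (mul lam u) v))

theorem Rmap_eq_iff_hom_general (hmul : ∀ u w : L, mul u (ld u w) = w)
    (μ : M → M → M → M) (μ' : M' → M' → M' → M') (π : L ≃ M) (π' : L ≃ M') :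
    (∀ lam : L, Rmap mul ld μ π lam = Rmap mul ld μ' π' lam) ↔
      IsTernaryHom μ μ' (π' ∘ π.symm) :=
  calc
    _ ↔ ∀ lam, xiMap mul ld μ π lam = xiMap mul ld μ' π' lam :=
      forall_congr' (Rmap_eq_iff_xiMap_eq mul ld μ μ' π π')
    _ ↔ ∀ lam, ternaryPullback μ π lam = ternaryPullback μ' π' lam :=
      forall_congr' (xiMap_eq_iff_ternaryPullback_eq hmul μ μ' π π')
    _ ↔ ternaryPullback μ π = ternaryPullback μ' π' := funext_iff.symm
    _ ↔ IsTernaryHom μ μ' (π' ∘ π.symm) :=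
      (isTernaryHom_comp_symm_iff_ternaryPullback_eq μ μ' π π').symm

end

/-- R^{(L,M,π)}(λ) = R^{(L,M',π')}(λ) for all λ iff
h = π' ∘ π⁻¹ is a homomorphism of ternary systems. -/
theorem Rmap_eq_iff_hom {L M M' : Type*} [Nonempty L]
    (mul ld : L → L → L)
    (hmul : ∀ u w : L, mul u (ld u w) = w)
    (hld : ∀ u v : L, ld u (mul u v) = v)
    (μ : M → M → M → M) (μ' : M' → M' → M' → M')
    (hM1 : CondM1 μ) (hM2 : CondM2 μ) (hM1' : CondM1 μ') (hM2' : CondM2 μ')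
    (π : L ≃ M) (π' : L ≃ M') :
    (∀ lam : L, Rmap mul ld μ π lam = Rmap mul ld μ' π' lam) ↔
      (∀ a b c : M,
        π' (π.symm (μ a b c))
          = μ' (π' (π.symm a)) (π' (π.symm b)) (π' (π.symm c))) :=
  Rmap_eq_iff_hom_general hmul μ μ' π π'
end

section
/- Let (L,·) be a left quasigroup and let R(λ) : L×L → L×L (λ ∈ L) be a dynamical Yang–Baxter map associated with L, L, and the multiplication (φ(λ,u) = λ·u). Write R(λ)(u,v) = (η_λ(v)(u), ξ_λ(u)(v)), and assume the invariance condition (λ·ξ_λ(u)(v))·η_λ(v)(u) = (λ·u)·v holds for all λ,u,v ∈ L. Then the ternary operation μ_L on L defined by μ_L(a,b,c) = a·ξ_a(a\b)(b\c) satisfies conditions (M1) and (M2). -/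
/-!
A triple of increments at `a` is a path `a, b, c, d` in `H`. By invariance, `R` replaces the middle
vertex `b` of a path `a, b, c` by `ternaryOp φ R a b c` and fixes both ends. The two sides of the
Yang–Baxter equation thus turn `a, b, c, d` into two paths with the same ends, and the equality of
their first inner vertices is (M1), that of their second inner vertices is (M2).
-/

section DynamicalMap

variable {H X : Type*} (φ : H → X ≃ H)

/-- The invariance condition `(λ·ξ_λ(u)(v))·η_λ(v)(u) = (λ·u)·v` for a family `R` of self-maps
of `X × X`, with `λ·u = φ λ u`. Since each `φ λ` is a bijection `X ≃ H`, left division `a\b` is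
`(φ a).symm b`. -/
def IsInvariantFamily (R : H → X × X → X × X) : Prop :=
  ∀ (a : H) (u v : X), φ (φ a (R a (u, v)).2) (R a (u, v)).1 = φ (φ a u) v

/-- The ternary operation `μ(a, b, c) = a·ξ_a(a\b)(b\c)` of a family `R`, where `ξ` is the second
component of `R`. It lives on the parameter set `H`, which need not be `X`. -/
def ternaryOp (R : H → X × X → X × X) (a b c : H) : H :=
  φ a (R a ((φ a).symm b, (φ b).symm c)).2

/-- The increments of the path `a, b, c, d`, last one first: the order in which both sides of the
Yang–Baxter equation return them. -/
def reverseIncrements (a b c d : H) : X × X × X :=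
  ((φ c).symm d, (φ b).symm c, (φ a).symm b)

lemma reverseIncrements_eq_iff {a b c b' c' d : H} :
    reverseIncrements φ a b c d = reverseIncrements φ a b' c' d ↔ b = b' ∧ c = c' := by
  constructor
  · simp only [reverseIncrements, Prod.mk.injEq]
    rintro ⟨-, hc, hb⟩
    obtain rfl := (φ a).symm.injective hb
    exact ⟨rfl, (φ b).symm.injective hc⟩
  · rintro ⟨rfl, rfl⟩
    rfl

lemma forall_triple_iff_forall_path (a : H) {P : X × X × X → Prop} :
    (∀ t, P t) ↔ ∀ b c d, P ((φ a).symm b, (φ b).symm c, (φ c).symm d) := by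
  refine ⟨fun h b c d => h _, fun h ⟨u, v, w⟩ => ?_⟩
  simpa only [Equiv.symm_apply_apply] using h (φ a u) (φ (φ a u) v) (φ (φ (φ a u) v) w)

variable {φ} {R : H → X × X → X × X}

local notation "μ" => ternaryOp φ R

lemma IsInvariantFamily.apply_increments (hR : IsInvariantFamily φ R) (a b c : H) :
    R a ((φ a).symm b, (φ b).symm c) = ((φ (μ a b c)).symm c, (φ a).symm (μ a b c)) := by
  refine Prod.ext ?_ ((φ a).symm_apply_apply _).symm
  rw [Equiv.eq_symm_apply]
  simpa only [ternaryOp, Equiv.apply_symm_apply] using hR a ((φ a).symm b) ((φ b).symm c)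

lemma IsInvariantFamily.yangBaxter_left (hR : IsInvariantFamily φ R) (a b c d : H) :
    r23 (R a) ((fun t => r13 (R (φ a t.2.1)) t)
        (r12 (R a) ((φ a).symm b, (φ b).symm c, (φ c).symm d))) =
      reverseIncrements φ a (μ a (μ a b c) (μ (μ a b c) c d)) (μ (μ a b c) c d) d := by
  simp only [r12, r13, r23, hR.apply_increments, Equiv.apply_symm_apply, reverseIncrements]

lemma IsInvariantFamily.yangBaxter_right (hR : IsInvariantFamily φ R) (a b c d : H) :
    (fun t => r12 (R (φ a t.2.2)) t) (r13 (R a) ((fun t => r23 (R (φ a t.1)) t)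
        ((φ a).symm b, (φ b).symm c, (φ c).symm d))) =
      reverseIncrements φ a (μ a b (μ b c d)) (μ (μ a b (μ b c d)) (μ b c d) d) d := by
  simp only [r12, r13, r23, hR.apply_increments, Equiv.apply_symm_apply, reverseIncrements]

theorem muL_satisfies_M1_M2_general (hR : IsInvariantFamily φ R) :
    IsDynamicalYB (fun a x => φ a x) R ↔ CondM1 μ ∧ CondM2 μ := by
  calc
    IsDynamicalYB (fun a x => φ a x) R ↔
        ∀ a b c d, μ a (μ a b c) (μ (μ a b c) c d) = μ a b (μ b c d) ∧
          μ (μ a b c) c d = μ (μ a b (μ b c d)) (μ b c d) d := by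
      refine forall_congr' fun a => (forall_triple_iff_forall_path φ a).trans ?_
      refine forall₃_congr fun b c d => ?_
      rw [hR.yangBaxter_left, hR.yangBaxter_right, reverseIncrements_eq_iff]
    _ ↔ CondM1 μ ∧ CondM2 μ := by
      simp only [CondM1, CondM2, forall_and]

end DynamicalMap

/-- if R(λ) is a dynamical YB map associated with L, L, (·) satisfying the
invariance condition, where R(λ)(u,v) = (η_λ(v)(u), ξ_λ(u)(v)), then
μ_L(a,b,c) = a·ξ_a(a\b)(b\c) satisfies (M1) and (M2). -/
theorem muL_satisfies_M1_M2 {L : Type*} [Nonempty L]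
    (mul ld : L → L → L)
    (hmul : ∀ u w : L, mul u (ld u w) = w)
    (hld : ∀ u v : L, ld u (mul u v) = v)
    (R : L → L × L → L × L)
    (hYB : IsDynamicalYB (fun lam u => mul lam u) R)
    (hinv : ∀ lam u v : L,
      mul (mul lam (R lam (u, v)).2) (R lam (u, v)).1 = mul (mul lam u) v) :
    CondM1 (fun a b c => mul a (R a (ld a b, ld b c)).2) ∧
      CondM2 (fun a b c => mul a (R a (ld a b, ld b c)).2) :=
  (muL_satisfies_M1_M2_general (φ := fun a => ⟨mul a, ld a, hld a, hmul a⟩) hinv).mp hYB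
end

section
/- Let (G,*) be a left quasigroup satisfying condition (5.1). Then the ternary operations on G defined by μ^G_1(a,b,c) = a*(b\c) and μ^G_2(a,b,c) = c*(b\a) both satisfy conditions (M1) and (M2). -/
/-- Condition (5.1) on a left quasigroup:
(a*c)\((a*b)*c) = (a'*c)\((a'*b)*c) for all a, a', b, c. -/
def Cond51 {G : Type*} (mul ld : G → G → G) : Prop :=
  ∀ a a' b c : G,
    ld (mul a c) (mul (mul a b) c) = ld (mul a' c) (mul (mul a' b) c)

/-!
The operation `μ₂` is `μ₁` with its arguments reversed, and this reversal interchanges (M1) and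
(M2), so it suffices to treat `μ₁`. There, (M1) is a cancellation. For (M2), put `x = b \ c` and
`y = c \ d`, so that `d = (b * x) * y`; then (M2) reads
`(a * x) * y = (a * y) * ((b * y) \ ((b * x) * y))`, which is (5.1) multiplied through by `a * y`.
-/

theorem condM1_reverse_iff {M : Type*} (μ : M → M → M → M) :
    CondM1 (fun a b c => μ c b a) ↔ CondM2 μ :=
  ⟨fun h a b c d => (h d c b a).symm, fun h a b c d => (h d c b a).symm⟩

theorem condM2_reverse_iff {M : Type*} (μ : M → M → M → M) :
    CondM2 (fun a b c => μ c b a) ↔ CondM1 μ :=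
  (condM1_reverse_iff (fun a b c => μ c b a)).symm

section LeftQuasigroup

variable {G : Type*} {mul ld : G → G → G}

theorem condM1_mul_ld (hld : ∀ u v : G, ld u (mul u v) = v) :
    CondM1 (fun a b c => mul a (ld b c)) := by
  intro a b c d
  simp only [hld]

theorem Cond51.mul_mul_ld_mul_mul (h51 : Cond51 mul ld)
    (hmul : ∀ u w : G, mul u (ld u w) = w) (a b x y : G) :
    mul (mul a y) (ld (mul b y) (mul (mul b x) y)) = mul (mul a x) y := by
  rw [h51 b a x y, hmul]

theorem Cond51.condM2_mul_ld (h51 : Cond51 mul ld)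
    (hmul : ∀ u w : G, mul u (ld u w) = w) (hld : ∀ u v : G, ld u (mul u v) = v) :
    CondM2 (fun a b c => mul a (ld b c)) := by
  intro a b c d
  calc
    mul (mul a (ld b c)) (ld c d)
    _ = mul (mul a (ld c d)) (ld (mul b (ld c d)) (mul (mul b (ld b c)) (ld c d))) :=
      (h51.mul_mul_ld_mul_mul hmul a b (ld b c) (ld c d)).symm
    _ = mul (mul a (ld c d)) (ld (mul b (ld c d)) d) := by rw [hmul b c, hmul c d]
    _ = mul (mul a (ld b (mul b (ld c d)))) (ld (mul b (ld c d)) d) := by rw [hld b (ld c d)]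

end LeftQuasigroup

/-- if (G,*) is a left quasigroup satisfying (5.1), then
μ^G_1(a,b,c) = a*(b\c) and μ^G_2(a,b,c) = c*(b\a) satisfy (M1) and (M2). -/
theorem muG1_muG2_satisfy_M1_M2 {G : Type*} [Nonempty G]
    (mul ld : G → G → G)
    (hmul : ∀ u w : G, mul u (ld u w) = w)
    (hld : ∀ u v : G, ld u (mul u v) = v)
    (h51 : Cond51 mul ld) :
    (CondM1 (fun a b c => mul a (ld b c)) ∧ CondM2 (fun a b c => mul a (ld b c))) ∧
      (CondM1 (fun a b c => mul c (ld b a)) ∧ CondM2 (fun a b c => mul c (ld b a))) := by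
  have hM1 : CondM1 (fun a b c => mul a (ld b c)) := condM1_mul_ld hld
  have hM2 : CondM2 (fun a b c => mul a (ld b c)) := h51.condM2_mul_ld hmul hld
  exact ⟨⟨hM1, hM2⟩, (condM1_reverse_iff _).mpr hM2, (condM2_reverse_iff _).mpr hM1⟩
end

section
/- Let (M,μ) be a ternary system satisfying conditions (M1) and (M2) and additionally μ(a, b, μ(b,c,d)) = μ(a,c,d) for all a,b,c,d ∈ M and μ(a,a,b) = b for all a,b ∈ M. Fix any e ∈ M and define a*b := μ(a,e,b). Then: (i) (M,*) is a left quasigroup, with left division a\c = μ(e,a,c) (i.e. a*μ(e,a,c) = c and μ(e,a,a*b) = b for all a,b,c ∈ M); (ii) (M,*) satisfies condition (5.1); and (iii) μ(a,b,c) = a*(b\c) for all a,b,c ∈ M, i.e. μ coincides with the ternary operation μ^G_1 of the left quasigroup (M,*). -/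
/-!
Read `μ a b` as a map `M → M`. The two additional identities say that `μ a b ∘ μ b c = μ a c` and
`μ a a = id`, so each `μ a b` is a bijection with inverse `μ b a`; this gives the left quasigroup
and `μ a b x = a * (b \ x)`. Condition (M2) then yields
`(a * b) * c = (a * c) * (c \ (b * c))`, so that `(a * c) \ ((a * b) * c)` equals `c \ (b * c)`,
in which `a` no longer occurs.
-/

/-- A family of transition maps `φ a b`, taking coordinates with respect to `b` to coordinates with
respect to `a`: an action of the pair groupoid of `ι` on `X`. A ternary operation `μ` on `M` is
regarded as such a family by currying, with `ι = X = M`. -/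
structure IsTransitionFamily {ι X : Type*} (φ : ι → ι → X → X) : Prop where
  apply_apply : ∀ (a b c : ι) (x : X), φ a b (φ b c x) = φ a c x
  apply_self : ∀ (a : ι) (x : X), φ a a x = x

namespace IsTransitionFamily

variable {ι X : Type*} {φ : ι → ι → X → X}

theorem apply_apply_swap (hφ : IsTransitionFamily φ) (a b : ι) (x : X) :
    φ a b (φ b a x) = x := by
  rw [hφ.apply_apply, hφ.apply_self]

theorem bijective (hφ : IsTransitionFamily φ) (a b : ι) : Function.Bijective (φ a b) :=
  Function.bijective_iff_has_inverse.mpr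
    ⟨φ b a, hφ.apply_apply_swap b a, hφ.apply_apply_swap a b⟩

end IsTransitionFamily

namespace CondM2

variable {M : Type*} {μ : M → M → M → M}

theorem self_distrib_right (hM2 : CondM2 μ) (hμ : IsTransitionFamily μ) (a b c d : M) :
    μ (μ a b c) b d = μ (μ a b d) d (μ c b d) :=
  calc
    μ (μ a b c) b d = μ (μ a b c) c (μ c b d) := (hμ.apply_apply _ _ _ _).symm
    _ = μ (μ a b (μ b c (μ c b d))) (μ b c (μ c b d)) (μ c b d) := hM2 a b c (μ c b d)
    _ = μ (μ a b d) d (μ c b d) := by rw [hμ.apply_apply_swap]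

theorem mul_leftDiv_mul_mul (hM2 : CondM2 μ) (hμ : IsTransitionFamily μ) (a b c d x : M) :
    μ x (μ a b d) (μ (μ a b c) b d) = μ x d (μ c b d) := by
  rw [hM2.self_distrib_right hμ, hμ.apply_apply]

theorem cond51 (hM2 : CondM2 μ) (hμ : IsTransitionFamily μ) (e : M) :
    Cond51 (fun a b => μ a e b) (fun a c => μ e a c) := fun a a' b c =>
  (hM2.mul_leftDiv_mul_mul hμ a e b c e).trans
    (hM2.mul_leftDiv_mul_mul hμ a' e b c e).symm

end CondM2

/-- a ternary system satisfying (M1), (M2), μ(a,b,μ(b,c,d)) = μ(a,c,d) and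
μ(a,a,b) = b arises as μ^G_1 of a left quasigroup, with a*b := μ(a,e,b),
left division a\c = μ(e,a,c). -/
theorem ternary_eq_muG1 {M : Type*} [Nonempty M] (μ : M → M → M → M)
    (hM1 : CondM1 μ) (hM2 : CondM2 μ)
    (h1 : ∀ a b c d : M, μ a b (μ b c d) = μ a c d)
    (h2 : ∀ a b : M, μ a a b = b)
    (e : M) :
    ((∀ u w : M, ∃! v : M, μ u e v = w) ∧
      (∀ a c : M, μ a e (μ e a c) = c) ∧
      (∀ a b : M, μ e a (μ a e b) = b)) ∧
    Cond51 (fun a b => μ a e b) (fun a c => μ e a c) ∧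
    (∀ a b c : M, μ a b c = μ a e (μ e b c)) := by
  have hμ : IsTransitionFamily μ := ⟨h1, h2⟩
  have existsUnique_mul_eq (u w : M) : ∃! v : M, μ u e v = w := (hμ.bijective u e).existsUnique w
  have mul_leftDiv (a c : M) : μ a e (μ e a c) = c := hμ.apply_apply_swap a e c
  have leftDiv_mul (a b : M) : μ e a (μ a e b) = b := hμ.apply_apply_swap e a b
  have eq_mul_leftDiv (a b c : M) : μ a b c = μ a e (μ e b c) := (hμ.apply_apply a e b c).symm
  exact ⟨⟨existsUnique_mul_eq, mul_leftDiv, leftDiv_mul⟩, hM2.cond51 hμ e, eq_mul_leftDiv⟩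
end

section
/- Let (M,μ) be a ternary system satisfying conditions (M1) and (M2) and additionally μ(μ(a,b,c), c, d) = μ(a,b,d) for all a,b,c,d ∈ M and μ(a,b,b) = a for all a,b ∈ M. Fix any e ∈ M and define a*b := μ(b,e,a). Then: (i) (M,*) is a left quasigroup, with left division a\c = μ(c,a,e); (ii) (M,*) satisfies condition (5.1); and (iii) μ(a,b,c) = c*(b\a) for all a,b,c ∈ M, i.e. μ coincides with the ternary operation μ^G_2 of the left quasigroup (M,*). -/
/-!
Read `μ a b c` as the transport of `a` from `b` to `c`. The identities `μ (μ a b c) c d = μ a b d`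
and `μ a b b = a` say that transport is path independent, so transport from `b` to `c` is inverted
by transport from `c` to `b`, and every transport factors through the base point `e`. Given path
independence, (M1) says that each right multiplication `x ↦ x * c = μ c e x` is an endomorphism
of `μ`. The quotient `(a * c) \ ((a * b) * c)` transports `(a * b) * c` from `a * c` to `e`; doing
so via `e * c` and applying the endomorphism to `μ (a * b) a e = b`, it becomes the transport of
`b * c` from `e * c` to `e`, which does not involve `a`. This is (5.1).
-/

section Transport

variable {X I : Type*} {μ : X → I → I → X}

theorem transport_symm (htrans : ∀ a b c d, μ (μ a b c) c d = μ a b d)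
    (hrefl : ∀ a b, μ a b b = a) (a : X) (b c : I) : μ (μ a b c) c b = a :=
  (htrans a b c b).trans (hrefl a b)

theorem transport_bijective (htrans : ∀ a b c d, μ (μ a b c) c d = μ a b d)
    (hrefl : ∀ a b, μ a b b = a) (b c : I) : Function.Bijective (fun a => μ a b c) :=
  Function.bijective_iff_has_inverse.2
    ⟨fun a => μ a c b, fun a => transport_symm htrans hrefl a b c,
      fun a => transport_symm htrans hrefl a c b⟩

end Transport

namespace CondM1

variable {M : Type*} {μ : M → M → M → M}

theorem map_translation (hM1 : CondM1 μ) (htrans : ∀ a b c d, μ (μ a b c) c d = μ a b d)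
    (c e x y z : M) :
    μ (μ c e x) (μ c e y) (μ c e z) = μ c e (μ x y z) := by
  simpa only [htrans] using hM1 (μ c e x) x y z

theorem transport_translation_transport (hM1 : CondM1 μ)
    (htrans : ∀ a b c d, μ (μ a b c) c d = μ a b d) (hrefl : ∀ a b, μ a b b = a)
    (c e a b f g : M) :
    μ (μ c e (μ b f a)) (μ c e a) g = μ (μ c e b) (μ c e f) g :=
  calc
    μ (μ c e (μ b f a)) (μ c e a) g
      = μ (μ (μ c e (μ b f a)) (μ c e a) (μ c e f)) (μ c e f) g := (htrans _ _ _ _).symm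
    _ = μ (μ c e (μ (μ b f a) a f)) (μ c e f) g := by rw [hM1.map_translation htrans]
    _ = μ (μ c e b) (μ c e f) g := by rw [transport_symm htrans hrefl]

theorem cond51 (hM1 : CondM1 μ) (htrans : ∀ a b c d, μ (μ a b c) c d = μ a b d)
    (hrefl : ∀ a b, μ a b b = a) (e : M) :
    Cond51 (fun a b => μ b e a) (fun a c => μ c a e) := fun a a' b c =>
  (hM1.transport_translation_transport htrans hrefl c e a b e e).trans
    (hM1.transport_translation_transport htrans hrefl c e a' b e e).symm

end CondM1

/-- a ternary system satisfying (M1), (M2), μ(μ(a,b,c),c,d) = μ(a,b,d) and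
μ(a,b,b) = a arises as μ^G_2 of a left quasigroup, with a*b := μ(b,e,a),
left division a\c = μ(c,a,e). -/
theorem ternary_eq_muG2 {M : Type*} [Nonempty M] (μ : M → M → M → M)
    (hM1 : CondM1 μ) (hM2 : CondM2 μ)
    (h1 : ∀ a b c d : M, μ (μ a b c) c d = μ a b d)
    (h2 : ∀ a b : M, μ a b b = a)
    (e : M) :
    ((∀ u w : M, ∃! v : M, μ v e u = w) ∧
      (∀ a c : M, μ (μ c a e) e a = c) ∧
      (∀ a b : M, μ (μ b e a) a e = b)) ∧
    Cond51 (fun a b => μ b e a) (fun a c => μ c a e) ∧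
    (∀ a b c : M, μ a b c = μ (μ a b e) e c) := by
  refine ⟨⟨fun u w => ?_, fun a c => ?_, fun a b => ?_⟩, ?_, fun a b c => ?_⟩
  · exact (transport_bijective h1 h2 e u).existsUnique w
  · exact transport_symm h1 h2 c a e
  · exact transport_symm h1 h2 b e a
  · exact hM1.cond51 h1 h2 e
  · exact (h1 a b e c).symm
end

section
/- Let (M,μ) be a ternary system satisfying conditions (M1) and (M2) and additionally μ(a,b,c) = μ(d, b, μ(a,d,c)) for all a,b,c,d ∈ M and μ(a,a,b) = b for all a,b ∈ M. Fix any e ∈ M and define a*b := μ(e,a,b). Then: (i) (M,*) is a left quasigroup, with left division a\c = μ(a,e,c); (ii) (M,*) satisfies conditions (5.6) and (5.7); and (iii) μ(a,b,c) = b*(a\c) for all a,b,c ∈ M, i.e. μ coincides with the ternary operation μ^G_3 of the left quasigroup (M,*). -/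
/-- Condition (5.6) on a left quasigroup:
(b*c)*(a\((a*c)*((b*c)\(b*d)))) = b*(a\((a*c)*d)). -/
def Cond56 {G : Type*} (mul ld : G → G → G) : Prop :=
  ∀ a b c d : G,
    mul (mul b c) (ld a (mul (mul a c) (ld (mul b c) (mul b d))))
      = mul b (ld a (mul (mul a c) d))

/-- Condition (5.7) on a left quasigroup:
(a*c)*((b*c)\(b*d)) = ((a*c)*d)*((b*(a\((a*c)*d)))\(b*d)). -/
def Cond57 {G : Type*} (mul ld : G → G → G) : Prop :=
  ∀ a b c d : G,
    mul (mul a c) (ld (mul b c) (mul b d))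
      = mul (mul (mul a c) d) (ld (mul b (ld a (mul (mul a c) d))) (mul b d))

/-!
The two extra identities say that the maps `μ a b : M → M` form a functor from the pair groupoid
on `M`: `μ d b ∘ μ a d = μ a b` and `μ a a = id`. A base point `e` trivializes it: putting
`L a = μ e a`, each `L a` is a permutation of `M` and `μ a b = L b ∘ (L a)⁻¹`. So `μ` is the
operation `μ₃` of the left quasigroup with left translations `L a`. For such an operation, (M1) and
(M2) turn into (5.6) and (5.7) under the substitution `(a, b, a * c, b * d)` for `(a, b, c, d)`,
which is invertible because left translations are.
-/

/-- `ld` is a left division for `mul`: `ld a` is the two-sided inverse of left multiplication by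
`a`. This encodes a left quasigroup by its two operations. -/
structure IsLeftDivision {G : Type*} (mul ld : G → G → G) : Prop where
  mul_ld : ∀ a c, mul a (ld a c) = c
  ld_mul : ∀ a b, ld a (mul a b) = b

/-- The ternary operation `μ₃(a, b, c) = b * (a \ c)` of a left quasigroup. -/
def muG3 {G : Type*} (mul ld : G → G → G) (a b c : G) : G :=
  mul b (ld a c)

namespace IsLeftDivision

variable {G : Type*} {mul ld : G → G → G}

theorem existsUnique_mul_eq (h : IsLeftDivision mul ld) (a c : G) : ∃! b, mul a b = c :=
  ⟨ld a c, h.mul_ld a c, fun b hb => by rw [← hb, h.ld_mul]⟩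

theorem condM1_muG3_iff (h : IsLeftDivision mul ld) :
    CondM1 (muG3 mul ld) ↔ Cond56 mul ld := by
  constructor <;> intro H a b c d
  · simpa only [muG3, h.ld_mul] using H a b (mul a c) (mul b d)
  · simpa only [muG3, h.mul_ld] using H a b (ld a c) (ld b d)

theorem condM2_muG3_iff (h : IsLeftDivision mul ld) :
    CondM2 (muG3 mul ld) ↔ Cond57 mul ld := by
  constructor <;> intro H a b c d
  · simpa only [muG3, h.ld_mul] using H a b (mul a c) (mul b d)
  · simpa only [muG3, h.mul_ld] using H a b (ld a c) (ld b d)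

end IsLeftDivision

/-- The maps `μ a b : X → X` transport from `a` to `b` functorially, that is, they form a functor
from the pair groupoid on `M` to the permutations of `X`. -/
structure IsTransport {M X : Type*} (μ : M → M → X → X) : Prop where
  comp : ∀ a d b x, μ d b (μ a d x) = μ a b x
  self : ∀ a x, μ a a x = x

namespace IsTransport

theorem leftInverse {M X : Type*} {μ : M → M → X → X} (h : IsTransport μ) (a b : M) :
    Function.LeftInverse (μ b a) (μ a b) := fun x => by
  rw [h.comp, h.self]

variable {M : Type*} {μ : M → M → M → M}

theorem isLeftDivision (h : IsTransport μ) (e : M) :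
    IsLeftDivision (fun a b => μ e a b) (fun a c => μ a e c) where
  mul_ld a := h.leftInverse a e
  ld_mul a := h.leftInverse e a

theorem muG3_eq (h : IsTransport μ) (e : M) :
    muG3 (fun a b => μ e a b) (fun a c => μ a e c) = μ := by
  funext a b c
  exact h.comp a e b c

end IsTransport

/-- a ternary system satisfying (M1), (M2), μ(a,b,c) = μ(d,b,μ(a,d,c)) and
μ(a,a,b) = b arises as μ^G_3 of a left quasigroup, with a*b := μ(e,a,b),
left division a\c = μ(a,e,c). -/
theorem ternary_eq_muG3 {M : Type*} [Nonempty M] (μ : M → M → M → M)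
    (hM1 : CondM1 μ) (hM2 : CondM2 μ)
    (h1 : ∀ a b c d : M, μ a b c = μ d b (μ a d c))
    (h2 : ∀ a b : M, μ a a b = b)
    (e : M) :
    ((∀ u w : M, ∃! v : M, μ e u v = w) ∧
      (∀ a c : M, μ e a (μ a e c) = c) ∧
      (∀ a b : M, μ a e (μ e a b) = b)) ∧
    (Cond56 (fun a b => μ e a b) (fun a c => μ a e c) ∧
      Cond57 (fun a b => μ e a b) (fun a c => μ a e c)) ∧
    (∀ a b c : M, μ a b c = μ e b (μ a e c)) := by
  have hμ : IsTransport μ := ⟨fun a d b x => (h1 a b x d).symm, h2⟩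
  have hdiv := hμ.isLeftDivision e
  have hmuG3 := hμ.muG3_eq e
  refine ⟨⟨hdiv.existsUnique_mul_eq, hdiv.mul_ld, hdiv.ld_mul⟩, ⟨?_, ?_⟩, fun a b c => h1 a b c e⟩
  · exact hdiv.condM1_muG3_iff.1 (hmuG3.symm ▸ hM1)
  · exact hdiv.condM2_muG3_iff.1 (hmuG3.symm ▸ hM2)
end

section
/- Let (L,·) be a left quasigroup, (M,μ) a ternary system satisfying conditions (M1) and (M2), and π : L → M a bijection. The dynamical Yang–Baxter map R^{(L,M,π)}(λ) satisfies the unitary condition R^{(L,M,π)}(λ) ∘ P ∘ R^{(L,M,π)}(λ) = P for all λ ∈ L (where P(u,v) = (v,u)) if and only if μ(a, μ(a,b,c), c) = b for all a,b,c ∈ M. -/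
/-!
`R(λ) ∘ P ∘ R(λ) = P` says that `P ∘ R(λ)` is an involution of `L × L`. In the coordinates
`(u, v) ↦ (π (λ·u), π ((λ·u)·v))`, which identify `L × L` with `M × M`, the map `P ∘ R(λ)` becomes
`(b, c) ↦ (μ(π λ, b, c), c)`: it fixes the endpoint `(λ·u)·v` and moves only the middle vertex.
This is an involution exactly when `μ(a, μ(a, b, c), c) = b` for `a = π λ` and all `b, c`.
-/

theorem comp_swap_comp_eq_swap_iff {α β : Type*} (r : α × β → β × α) :
    r ∘ Prod.swap ∘ r = Prod.swap ↔ Function.Involutive (Prod.swap ∘ r) :=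
  funext_iff.trans (forall_congr' fun _ => Prod.swap_injective.eq_iff.symm)

theorem involutive_iff_of_semiconj {α β : Type*} {f : α → α} {g : β → β} (e : α ≃ β)
    (h : Function.Semiconj e f g) : Function.Involutive f ↔ Function.Involutive g :=
  e.forall_congr fun x => by rw [← h x, ← h (f x), e.apply_eq_iff_eq]

/-- The self-map `(b, c) ↦ (μ(a, b, c), c)` of `M × M`: for a path `a → b → c`, it replaces the
middle vertex and keeps both endpoints. -/
def replaceMiddle {M : Type*} (μ : M → M → M → M) (a : M) (q : M × M) : M × M :=
  (μ a q.1 q.2, q.2)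

theorem involutive_replaceMiddle_iff {M : Type*} (μ : M → M → M → M) (a : M) :
    Function.Involutive (replaceMiddle μ a) ↔ ∀ b c : M, μ a (μ a b c) c = b := by
  simp only [Function.Involutive, Prod.forall, replaceMiddle, Prod.mk.injEq, and_true]

section LeftQuasigroup

variable {L M : Type*} (mul ld : L → L → L)
  (hmul : ∀ u w : L, mul u (ld u w) = w) (hld : ∀ u v : L, ld u (mul u v) = v)

/-- Left translation by `u` in a left quasigroup, with left division by `u` as its inverse. -/
def leftTranslation (u : L) : L ≃ L := ⟨mul u, ld u, hld u, hmul u⟩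

/-- The coordinates `(u, v) ↦ (π (λ·u), π ((λ·u)·v))` on `L × L`: the pair `(u, v)` is read as the
steps of a path `λ → λ·u → (λ·u)·v`, recorded by the images in `M` of its last two vertices. -/
def pathCoordinates (π : L ≃ M) (lam : L) : L × L ≃ M × M :=
  Equiv.prodShear ((leftTranslation mul ld hmul hld lam).trans π)
    fun u => (leftTranslation mul ld hmul hld (mul lam u)).trans π

theorem pathCoordinates_apply (π : L ≃ M) (lam : L) (p : L × L) :
    pathCoordinates mul ld hmul hld π lam p = (π (mul lam p.1), π (mul (mul lam p.1) p.2)) :=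
  rfl

theorem semiconj_pathCoordinates_swap_comp_Rmap (μ : M → M → M → M) (π : L ≃ M) (lam : L) :
    Function.Semiconj (pathCoordinates mul ld hmul hld π lam)
      (Prod.swap ∘ Rmap mul ld μ π lam) (replaceMiddle μ (π lam)) := fun p => by
  simp only [Function.comp_apply, pathCoordinates_apply, Rmap, Prod.swap_prod_mk, xiMap, hmul,
    Equiv.apply_symm_apply, replaceMiddle]

end LeftQuasigroup

theorem Rmap_comp_swap_comp_Rmap_eq_swap_iff {L M : Type*} (mul ld : L → L → L)
    (hmul : ∀ u w : L, mul u (ld u w) = w) (hld : ∀ u v : L, ld u (mul u v) = v)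
    (μ : M → M → M → M) (π : L ≃ M) (lam : L) :
    Rmap mul ld μ π lam ∘ Prod.swap ∘ Rmap mul ld μ π lam = Prod.swap ↔
      ∀ b c : M, μ (π lam) (μ (π lam) b c) c = b :=
  calc Rmap mul ld μ π lam ∘ Prod.swap ∘ Rmap mul ld μ π lam = Prod.swap
    _ ↔ Function.Involutive (Prod.swap ∘ Rmap mul ld μ π lam) := comp_swap_comp_eq_swap_iff _
    _ ↔ Function.Involutive (replaceMiddle μ (π lam)) :=
      involutive_iff_of_semiconj (pathCoordinates mul ld hmul hld π lam)
        (semiconj_pathCoordinates_swap_comp_Rmap mul ld hmul hld μ π lam)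
    _ ↔ ∀ b c : M, μ (π lam) (μ (π lam) b c) c = b := involutive_replaceMiddle_iff μ (π lam)

theorem unitary_iff_general {L M : Type*} (mul ld : L → L → L)
    (hmul : ∀ u w : L, mul u (ld u w) = w) (hld : ∀ u v : L, ld u (mul u v) = v)
    (μ : M → M → M → M) (π : L ≃ M) :
    (∀ lam : L,
        Rmap mul ld μ π lam ∘ Prod.swap ∘ Rmap mul ld μ π lam = Prod.swap) ↔
      (∀ a b c : M, μ a (μ a b c) c = b) :=
  π.forall_congr (Rmap_comp_swap_comp_Rmap_eq_swap_iff mul ld hmul hld μ π)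

/-- R^{(L,M,π)}(λ) satisfies the unitary condition
R(λ) ∘ P ∘ R(λ) = P for all λ iff μ(a, μ(a,b,c), c) = b for all a,b,c. -/
theorem unitary_iff {L M : Type*} [Nonempty L] [Nonempty M]
    (mul ld : L → L → L)
    (hmul : ∀ u w : L, mul u (ld u w) = w)
    (hld : ∀ u v : L, ld u (mul u v) = v)
    (μ : M → M → M → M)
    (hM1 : CondM1 μ) (hM2 : CondM2 μ)
    (π : L ≃ M) :
    (∀ lam : L,
        Rmap mul ld μ π lam ∘ Prod.swap ∘ Rmap mul ld μ π lam = Prod.swap) ↔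
      (∀ a b c : M, μ a (μ a b c) c = b) :=
  unitary_iff_general mul ld hmul hld μ π
end

section
/- Let (L₁,·) and (L₂,·) be left quasigroups, (M,μ) a ternary system satisfying conditions (M1) and (M2), and π₁ : L₁ → M, π₂ : L₂ → M bijections. Set g = π₂⁻¹ ∘ π₁ : L₁ → L₂. For λ ∈ Lᵢ define f̃⁽ⁱ⁾_λ(u,v) = (λ·u, (λ·u)·v) on Lᵢ×Lᵢ, and let P_{Lᵢ}(u,v) = (v,u). For λ₁ ∈ L₁ define J(λ₁) = (f̃⁽²⁾_{g(λ₁)})⁻¹ ∘ (g×g) ∘ f̃⁽¹⁾_{λ₁} ∘ P_{L₁} : L₁×L₁ → L₂×L₂, J²¹(λ₁) = P_{L₂} ∘ J(λ₁) ∘ P_{L₁}, and R^{(L₂,M,π₂) 21}(λ₂) = P_{L₂} ∘ R^{(L₂,M,π₂)}(λ₂) ∘ P_{L₂}. Then for every λ₁ ∈ L₁: R^{(L₁,M,π₁)}(λ₁) = J(λ₁)⁻¹ ∘ R^{(L₂,M,π₂) 21}(g(λ₁)) ∘ J²¹(λ₁). -/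
/-- f̃_λ(u,v) = (λ·u, (λ·u)·v). -/
def fTilde {L : Type*} (mul : L → L → L) (lam : L) (p : L × L) : L × L :=
  (mul lam p.1, mul (mul lam p.1) p.2)

/-- The inverse of f̃_λ: (u,v) ↦ (λ\u, u\v). -/
def fTildeInv {L : Type*} (ld : L → L → L) (lam : L) (p : L × L) : L × L :=
  (ld lam p.1, ld p.1 p.2)

/-!
Record a pair `(u, v)` by the labels `π (λ·u)`, `π ((λ·u)·v)` of the heights it reaches from `λ`.
In these coordinates `P ∘ R(λ)` becomes `(b, c) ↦ (μ (π λ) b c, c)`, which depends on `(M, μ)` and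
the label `π λ` only. Hence two left quasigroups labelled by the same `M` give conjugate maps
`P ∘ R`, and `J ∘ P` is the change of coordinates between them.
-/

/-- `(L, mul)` is a left quasigroup whose left division is `ld`. -/
structure IsLeftQuasigroup {L : Type*} (mul ld : L → L → L) : Prop where
  mul_ld : ∀ u w, mul u (ld u w) = w
  ld_mul : ∀ u v, ld u (mul u v) = v

/-- The map `(b, c) ↦ (μ a b c, c)` replacing the middle label of a path `a`, `b`, `c`: the form
that `P ∘ R(λ)` takes on labels. -/
def faceMap {M : Type*} (μ : M → M → M → M) (a : M) (p : M × M) : M × M :=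
  (μ a p.1 p.2, p.2)

namespace IsLeftQuasigroup

section Heights

variable {L M : Type*} {mul ld : L → L → L} (h : IsLeftQuasigroup mul ld)

/-- The bijection `f̃_λ` of `L × L`. -/
def fTildeEquiv (lam : L) : L × L ≃ L × L where
  toFun := fTilde mul lam
  invFun := fTildeInv ld lam
  left_inv p := by simp only [fTilde, fTildeInv, h.ld_mul]
  right_inv p := by simp only [fTilde, fTildeInv, h.mul_ld]

/-- The coordinates `(π × π) ∘ f̃_λ` on `L × L`: the labels of the heights reached from `λ`. -/
def heightEquiv (π : L ≃ M) (lam : L) : L × L ≃ M × M :=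
  (h.fTildeEquiv lam).trans (π.prodCongr π)

theorem heightEquiv_swap_Rmap (μ : M → M → M → M) (π : L ≃ M) (lam : L) (p : L × L) :
    h.heightEquiv π lam (Rmap mul ld μ π lam p).swap =
      faceMap μ (π lam) (h.heightEquiv π lam p) := by
  have mul_xiMap : mul lam (xiMap mul ld μ π lam p.1 p.2) =
      π.symm (μ (π lam) (π (mul lam p.1)) (π (mul (mul lam p.1) p.2))) :=
    h.mul_ld _ _
  ext
  · exact (congrArg π mul_xiMap).trans (π.apply_symm_apply _)
  · exact congrArg π (h.mul_ld _ _)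

end Heights

section Correspondence

variable {L₁ L₂ M : Type*} {mul₁ ld₁ : L₁ → L₁ → L₁} {mul₂ ld₂ : L₂ → L₂ → L₂}
  (h₁ : IsLeftQuasigroup mul₁ ld₁) (h₂ : IsLeftQuasigroup mul₂ ld₂) (π₁ : L₁ ≃ M) (π₂ : L₂ ≃ M)

/-- The bijection `J`: flip, then match the labels of the heights reached from `lam₁` and from
`lam₂`. The paper's `J(λ₁)` is the case `lam₂ = π₂⁻¹ (π₁ λ₁)`. -/
def irfEquiv (lam₁ : L₁) (lam₂ : L₂) : L₁ × L₁ ≃ L₂ × L₂ :=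
  (Equiv.prodComm L₁ L₁).trans ((h₁.heightEquiv π₁ lam₁).trans (h₂.heightEquiv π₂ lam₂).symm)

theorem Rmap_eq_irfEquiv_symm_comp (μ : M → M → M → M) {lam₁ : L₁} {lam₂ : L₂}
    (hlam : π₂ lam₂ = π₁ lam₁) :
    Rmap mul₁ ld₁ μ π₁ lam₁ =
      (irfEquiv h₁ h₂ π₁ π₂ lam₁ lam₂).symm ∘
        (Prod.swap ∘ Rmap mul₂ ld₂ μ π₂ lam₂ ∘ Prod.swap) ∘
          (Prod.swap ∘ irfEquiv h₁ h₂ π₁ π₂ lam₁ lam₂ ∘ Prod.swap) := by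
  let Φ₁ := h₁.heightEquiv π₁ lam₁
  let Φ₂ := h₂.heightEquiv π₂ lam₂
  funext p
  symm
  calc
    _ = (Φ₁.symm (Φ₂ (Rmap mul₂ ld₂ μ π₂ lam₂ (Φ₂.symm (Φ₁ p))).swap)).swap := rfl
    _ = (Φ₁.symm (faceMap μ (π₁ lam₁) (Φ₁ p))).swap := by
      rw [h₂.heightEquiv_swap_Rmap, Φ₂.apply_symm_apply, hlam]
    _ = (Φ₁.symm (Φ₁ (Rmap mul₁ ld₁ μ π₁ lam₁ p).swap)).swap := by
      rw [h₁.heightEquiv_swap_Rmap]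
    _ = Rmap mul₁ ld₁ μ π₁ lam₁ p := by
      rw [Φ₁.symm_apply_apply, Prod.swap_swap]

end Correspondence

end IsLeftQuasigroup

theorem IRF_IRF_correspondence_general {L₁ L₂ M : Type*}
    {mul₁ ld₁ : L₁ → L₁ → L₁} (h₁ : IsLeftQuasigroup mul₁ ld₁)
    {mul₂ ld₂ : L₂ → L₂ → L₂} (h₂ : IsLeftQuasigroup mul₂ ld₂)
    (μ : M → M → M → M) (π₁ : L₁ ≃ M) (π₂ : L₂ ≃ M) :
    ∀ lam₁ : L₁,
      let g : L₁ → L₂ := fun u => π₂.symm (π₁ u)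
      let ginv : L₂ → L₁ := fun u => π₁.symm (π₂ u)
      let J : L₁ × L₁ → L₂ × L₂ :=
        fTildeInv ld₂ (g lam₁) ∘ Prod.map g g ∘ fTilde mul₁ lam₁ ∘ Prod.swap
      let Jinv : L₂ × L₂ → L₁ × L₁ :=
        Prod.swap ∘ fTildeInv ld₁ lam₁ ∘ Prod.map ginv ginv ∘ fTilde mul₂ (g lam₁)
      let J21 : L₁ × L₁ → L₂ × L₂ := Prod.swap ∘ J ∘ Prod.swap
      let R21 : L₂ × L₂ → L₂ × L₂ :=
        Prod.swap ∘ Rmap mul₂ ld₂ μ π₂ (g lam₁) ∘ Prod.swap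
      (∀ p : L₁ × L₁, Jinv (J p) = p) ∧
      (∀ p : L₂ × L₂, J (Jinv p) = p) ∧
      Rmap mul₁ ld₁ μ π₁ lam₁ = Jinv ∘ R21 ∘ J21 := by
  intro lam₁ g
  let E := h₁.irfEquiv h₂ π₁ π₂ lam₁ (g lam₁)
  have hg : π₂ (g lam₁) = π₁ lam₁ := π₂.apply_symm_apply _
  exact ⟨E.symm_apply_apply, E.apply_symm_apply, h₁.Rmap_eq_irfEquiv_symm_comp h₂ π₁ π₂ μ hg⟩

/-- IRF-IRF correspondence: with g = π₂⁻¹ ∘ π₁,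
J(λ₁) = (f̃⁽²⁾_{g(λ₁)})⁻¹ ∘ (g×g) ∘ f̃⁽¹⁾_{λ₁} ∘ P, J²¹(λ₁) = P ∘ J(λ₁) ∘ P, and
R²¹(λ₂) = P ∘ R^{(L₂,M,π₂)}(λ₂) ∘ P, one has
R^{(L₁,M,π₁)}(λ₁) = J(λ₁)⁻¹ ∘ R²¹(g(λ₁)) ∘ J²¹(λ₁). -/
theorem IRF_IRF_correspondence {L₁ L₂ M : Type*} [Nonempty L₁] [Nonempty L₂]
    (mul₁ ld₁ : L₁ → L₁ → L₁)
    (hmul₁ : ∀ u w : L₁, mul₁ u (ld₁ u w) = w)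
    (hld₁ : ∀ u v : L₁, ld₁ u (mul₁ u v) = v)
    (mul₂ ld₂ : L₂ → L₂ → L₂)
    (hmul₂ : ∀ u w : L₂, mul₂ u (ld₂ u w) = w)
    (hld₂ : ∀ u v : L₂, ld₂ u (mul₂ u v) = v)
    (μ : M → M → M → M)
    (hM1 : CondM1 μ) (hM2 : CondM2 μ)
    (π₁ : L₁ ≃ M) (π₂ : L₂ ≃ M) :
    ∀ lam₁ : L₁,
      let g : L₁ → L₂ := fun u => π₂.symm (π₁ u)
      let ginv : L₂ → L₁ := fun u => π₁.symm (π₂ u)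
      let J : L₁ × L₁ → L₂ × L₂ :=
        fTildeInv ld₂ (g lam₁) ∘ Prod.map g g ∘ fTilde mul₁ lam₁ ∘ Prod.swap
      let Jinv : L₂ × L₂ → L₁ × L₁ :=
        Prod.swap ∘ fTildeInv ld₁ lam₁ ∘ Prod.map ginv ginv ∘ fTilde mul₂ (g lam₁)
      let J21 : L₁ × L₁ → L₂ × L₂ := Prod.swap ∘ J ∘ Prod.swap
      let R21 : L₂ × L₂ → L₂ × L₂ :=
        Prod.swap ∘ Rmap mul₂ ld₂ μ π₂ (g lam₁) ∘ Prod.swap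
      (∀ p : L₁ × L₁, Jinv (J p) = p) ∧
      (∀ p : L₂ × L₂, J (Jinv p) = p) ∧
      Rmap mul₁ ld₁ μ π₁ lam₁ = Jinv ∘ R21 ∘ J21 :=
  IRF_IRF_correspondence_general ⟨hmul₁, hld₁⟩ ⟨hmul₂, hld₂⟩ μ π₁ π₂
end
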